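/- arXiv:2209.09945 — 2 statements merged into one kernel-verified Lean document; each statement's English description precedes it below -/
import Mathlib

section
/- Fix integers n, m with 1 ≤ m ≤ n, let P := Y_{m,n−m+1} be the rectangular Young diagram poset, and let κ : P → {1,…,n}, κ((i,j)) := j − i + m, be its I-coloring. Then for all k ∈ {1,…,n−1} and every order filter F of P, S_k(S_{k+1}(S_k(F))) = S_{k+1}(S_k(S_{k+1}(F))). -/
/-- `F` is an order filter of the poset `α`: upward closed subset. -/
def IsOrderFilter {α : Type*} [PartialOrder α] (F : Set α) : Prop :=
  ∀ ⦃x y : α⦄, x ∈ F → x ≤ y → y ∈ F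

/-- `A_c(F)`: the union of all order filters `F'` with `F' \ F ⊆ κ⁻¹({c})`. -/
def Aop {α C : Type*} [PartialOrder α] (κ : α → C) (c : C) (F : Set α) : Set α :=
  ⋃₀ {F' : Set α | IsOrderFilter F' ∧ F' \ F ⊆ κ ⁻¹' {c}}

/-- `R_c(F)`: the intersection of all order filters `F'` with `F \ F' ⊆ κ⁻¹({c})`. -/
def Rop {α C : Type*} [PartialOrder α] (κ : α → C) (c : C) (F : Set α) : Set α :=
  ⋂₀ {F' : Set α | IsOrderFilter F' ∧ F \ F' ⊆ κ ⁻¹' {c}}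

open Classical in
/-- `S_c(F) := (A_c(F) \ F) ∪ R_c(F)` if this is an order filter, and `F` otherwise. -/
noncomputable def Sop {α C : Type*} [PartialOrder α] (κ : α → C) (c : C) (F : Set α) : Set α :=
  if IsOrderFilter ((Aop κ c F \ F) ∪ Rop κ c F) then (Aop κ c F \ F) ∪ Rop κ c F else F

/-- The rectangular Young diagram poset `Y_{m,N}` (cells `(i,j)`, `1 ≤ i ≤ m`,
`1 ≤ j ≤ N`, with `(i₁,j₁) ≤ (i₂,j₂)` iff `i₁ ≥ i₂` and `j₁ ≥ j₂`), realized as the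
product of two dual finite chains. -/
abbrev YD (m N : ℕ) := (Fin m)ᵒᵈ × (Fin N)ᵒᵈ

/-- The `I`-coloring of `Y_{m, n−m+1}` for type `A_n`: `κ((i,j)) = j − i + m`
(in 1-indexed coordinates), with values in `{1,…,n}`. -/
def ykappa (m N : ℕ) (x : YD m N) : ℤ :=
  ((OrderDual.ofDual x.2 : Fin N) : ℤ) - ((OrderDual.ofDual x.1 : Fin m) : ℤ) + m

theorem mem_Aop_iff {α C : Type*} [PartialOrder α] (κ : α → C) (c : C) (F : Set α)
    (hF : IsOrderFilter F) (x : α) :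
    x ∈ Aop κ c F ↔ ∀ y, x ≤ y → y ∈ F ∨ κ y = c := by
  constructor
  · rintro ⟨F', ⟨h1, h2⟩, hx⟩ y hy
    by_cases h : y ∈ F
    · exact Or.inl h
    · exact Or.inr (h2 ⟨h1 hx hy, h⟩)
  · intro h
    refine ⟨{z | ∀ y, z ≤ y → y ∈ F ∨ κ y = c}, ⟨?_, ?_⟩, h⟩
    · intro a b ha hab y hy
      exact ha y (hab.trans hy)
    · rintro z ⟨hz, hzF⟩
      exact (hz z le_rfl).resolve_left hzF

theorem mem_Rop_iff {α C : Type*} [PartialOrder α] (κ : α → C) (c : C) (F : Set α)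
    (hF : IsOrderFilter F) (x : α) :
    x ∈ Rop κ c F ↔ ∃ y, y ≤ x ∧ y ∈ F ∧ κ y ≠ c := by
  constructor
  · intro h
    refine h {z | ∃ y, y ≤ z ∧ y ∈ F ∧ κ y ≠ c} ⟨?_, ?_⟩
    · rintro a b ⟨y, h1, h2⟩ hab
      exact ⟨y, h1.trans hab, h2⟩
    · rintro z ⟨hz, hzF⟩
      by_contra hc
      exact hzF ⟨z, le_rfl, hz, hc⟩
  · rintro ⟨y, hy, hyF, hc⟩ F' ⟨h1, h2⟩
    refine h1 ?_ hy
    by_contra h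
    exact hc (h2 ⟨hyF, h⟩)

/-- row index -/
def rowIx {m N : ℕ} (x : YD m N) : ℤ := ((OrderDual.ofDual x.1 : Fin m) : ℤ)
/-- column index -/
def colIx {m N : ℕ} (x : YD m N) : ℤ := ((OrderDual.ofDual x.2 : Fin N) : ℤ)

theorem ykappa_eq {m N : ℕ} (x : YD m N) : ykappa m N x = colIx x - rowIx x + m := rfl

theorem YD_le {m N : ℕ} (x y : YD m N) : x ≤ y ↔ rowIx y ≤ rowIx x ∧ colIx y ≤ colIx x := by
  obtain ⟨a, b⟩ := x
  obtain ⟨c, d⟩ := y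
  unfold rowIx colIx
  rw [Prod.mk_le_mk]
  simp only [Nat.cast_le]
  rfl

theorem YD_ext {m N : ℕ} (x y : YD m N) (h1 : rowIx x = rowIx y) (h2 : colIx x = colIx y) : x = y :=
  le_antisymm ((YD_le _ _).2 ⟨h1.ge, h2.ge⟩) ((YD_le _ _).2 ⟨h1.le, h2.le⟩)

theorem YD_bd {m N : ℕ} (x : YD m N) : 0 ≤ rowIx x ∧ rowIx x < m ∧ 0 ≤ colIx x ∧ colIx x < N := by
  unfold rowIx colIx
  have h1 := (OrderDual.ofDual x.1 : Fin m).isLt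
  have h2 := (OrderDual.ofDual x.2 : Fin N).isLt
  omega

theorem YD_ex {m N : ℕ} (i j : ℤ) (hi : 0 ≤ i) (him : i < m) (hj : 0 ≤ j) (hjN : j < N) :
    ∃ x : YD m N, rowIx x = i ∧ colIx x = j := by
  refine ⟨(OrderDual.toDual ⟨i.toNat, by omega⟩, OrderDual.toDual ⟨j.toNat, by omega⟩), ?_, ?_⟩
  · simp [rowIx, hi]
  · simp [colIx, hj]

/-- extension of a filter to the whole plane -/
def pext {m N : ℕ} (F : Set (YD m N)) (i j : ℤ) : Prop :=
  i < 0 ∨ j < 0 ∨ ∃ x ∈ F, rowIx x = i ∧ colIx x = j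

theorem pext_cell {m N : ℕ} (F : Set (YD m N)) (x : YD m N) :
    pext F (rowIx x) (colIx x) ↔ x ∈ F := by
  have := YD_bd x
  constructor
  · rintro (h | h | ⟨y, hy, h1, h2⟩)
    · omega
    · omega
    · rwa [YD_ext _ _ h1 h2] at hy
  · intro h
    exact Or.inr (Or.inr ⟨x, h, rfl, rfl⟩)

theorem pext_mono {m N : ℕ} (F : Set (YD m N)) (hF : IsOrderFilter F) (i j i' j' : ℤ)
    (hi : i' ≤ i) (hj : j' ≤ j) (h : pext F i j) : pext F i' j' := by
  by_cases h1 : i' < 0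
  · exact Or.inl h1
  by_cases h2 : j' < 0
  · exact Or.inr (Or.inl h2)
  rcases h with h | h | ⟨x, hx, rfl, rfl⟩
  · omega
  · omega
  have := YD_bd x
  obtain ⟨y, rfl, rfl⟩ := YD_ex (m := m) (N := N) i' j' (by omega) (by omega) (by omega) (by omega)
  exact (pext_cell _ _).2 (hF hx ((YD_le _ _).2 ⟨hi, hj⟩))

theorem pext_inj {m N : ℕ} (F G : Set (YD m N)) (h : ∀ i j, pext F i j ↔ pext G i j) :
    F = G := by
  ext x
  rw [← pext_cell F, ← pext_cell G, h]

theorem Sset_filter {m N : ℕ} (c : ℤ) (F : Set (YD m N)) (hF : IsOrderFilter F) :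
    IsOrderFilter ((Aop (ykappa m N) c F \ F) ∪ Rop (ykappa m N) c F) := by
  intro x y hx hxy
  by_cases hne : x = y
  · rwa [← hne]
  right
  rw [mem_Rop_iff _ _ _ hF]
  rcases hx with ⟨hA, hxF⟩ | hR
  · rw [mem_Aop_iff _ _ _ hF] at hA
    have hc := (hA x le_rfl).resolve_left hxF
    rw [YD_le] at hxy
    have bx := YD_bd x
    have bY := YD_bd y
    have hlt : rowIx y < rowIx x ∨ colIx y < colIx x := by
      by_contra hcon
      exact hne (YD_ext _ _ (by omega) (by omega))
    rw [ykappa_eq] at hc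
    rcases hlt with hlt | hlt
    · obtain ⟨z, h1, h2⟩ := YD_ex (m := m) (N := N) (rowIx x - 1) (colIx x)
        (by omega) (by omega) (by omega) (by omega)
      have hz : ykappa m N z ≠ c := by rw [ykappa_eq]; omega
      exact ⟨z, (YD_le _ _).2 (by omega),
        (hA z ((YD_le _ _).2 (by omega))).resolve_right hz, hz⟩
    · obtain ⟨z, h1, h2⟩ := YD_ex (m := m) (N := N) (rowIx x) (colIx x - 1)
        (by omega) (by omega) (by omega) (by omega)
      have hz : ykappa m N z ≠ c := by rw [ykappa_eq]; omega
      exact ⟨z, (YD_le _ _).2 (by omega),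
        (hA z ((YD_le _ _).2 (by omega))).resolve_right hz, hz⟩
  · rw [mem_Rop_iff _ _ _ hF] at hR
    obtain ⟨z, hz, h⟩ := hR
    exact ⟨z, hz.trans hxy, h⟩

theorem Sop_eq {m N : ℕ} (c : ℤ) (F : Set (YD m N)) (hF : IsOrderFilter F) :
    Sop (ykappa m N) c F = (Aop (ykappa m N) c F \ F) ∪ Rop (ykappa m N) c F :=
  if_pos (Sset_filter c F hF)

theorem Sop_filter {m N : ℕ} (c : ℤ) (F : Set (YD m N)) (hF : IsOrderFilter F) :
    IsOrderFilter (Sop (ykappa m N) c F) := by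
  rw [Sop_eq c F hF]
  exact Sset_filter c F hF

theorem pext_Sop_ne {m N : ℕ} (c : ℤ) (F : Set (YD m N)) (hF : IsOrderFilter F) (i j : ℤ)
    (h : j - i + m ≠ c) : pext (Sop (ykappa m N) c F) i j ↔ pext F i j := by
  have key : ∀ x : YD m N, ykappa m N x ≠ c → (x ∈ Sop (ykappa m N) c F ↔ x ∈ F) := by
    intro x hx
    rw [Sop_eq c F hF]
    constructor
    · rintro (⟨h1, h2⟩ | h1)
      · rw [mem_Aop_iff _ _ _ hF] at h1
        exact (h1 x le_rfl).resolve_right hx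
      · rw [mem_Rop_iff _ _ _ hF] at h1
        obtain ⟨y, hy, hyF, -⟩ := h1
        exact hF hyF hy
    · intro hxF
      right
      rw [mem_Rop_iff _ _ _ hF]
      exact ⟨x, le_rfl, hxF, hx⟩
  unfold pext
  refine or_congr Iff.rfl (or_congr Iff.rfl (exists_congr fun x => ?_))
  constructor
  · rintro ⟨hx, rfl, rfl⟩
    exact ⟨(key x h).1 hx, rfl, rfl⟩
  · rintro ⟨hx, rfl, rfl⟩
    exact ⟨(key x h).2 hx, rfl, rfl⟩

theorem pext_Sop_eq {m N : ℕ} (hm : 1 ≤ m) (c : ℤ) (hc1 : 1 ≤ c) (hc2 : c + 1 ≤ m + N)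
    (F : Set (YD m N)) (hF : IsOrderFilter F) (i j : ℤ)
    (h : j - i + m = c) : pext (Sop (ykappa m N) c F) i j ↔
      (pext F (i+1) j ∨ pext F i (j+1)) ∨ (¬ pext F i j ∧ pext F (i-1) j ∧ pext F i (j-1)) := by
  by_cases hi : i < 0
  · exact iff_of_true (Or.inl hi) (Or.inl (Or.inr (Or.inl hi)))
  by_cases hj : j < 0
  · exact iff_of_true (Or.inr (Or.inl hj)) (Or.inl (Or.inl (Or.inr (Or.inl hj))))
  by_cases hbd : i < m ∧ j < N
  · obtain ⟨x, rfl, rfl⟩ := YD_ex (m := m) (N := N) i j (by omega) (by omega) (by omega) (by omega)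
    have bx := YD_bd x
    have hlow : (pext F (rowIx x + 1) (colIx x) ∨ pext F (rowIx x) (colIx x + 1)) ↔
        x ∈ Rop (ykappa m N) c F := by
      rw [mem_Rop_iff _ _ _ hF]
      constructor
      · rintro ((h1 | h1 | ⟨y, hy, h1, h2⟩) | (h1 | h1 | ⟨y, hy, h1, h2⟩))
        · omega
        · omega
        · exact ⟨y, (YD_le _ _).2 (by omega), hy, by rw [ykappa_eq]; omega⟩
        · omega
        · omega
        · exact ⟨y, (YD_le _ _).2 (by omega), hy, by rw [ykappa_eq]; omega⟩
      · rintro ⟨y, hy, hyF, hyc⟩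
        rw [YD_le] at hy
        rw [ykappa_eq] at hyc
        have hp := (pext_cell F y).2 hyF
        by_cases h1 : rowIx x + 1 ≤ rowIx y
        · exact Or.inl (pext_mono F hF _ _ _ _ h1 hy.2 hp)
        · exact Or.inr (pext_mono F hF _ _ _ _ hy.1 (by omega) hp)
    have hup : (pext F (rowIx x - 1) (colIx x) ∧ pext F (rowIx x) (colIx x - 1)) ↔
        x ∈ Aop (ykappa m N) c F := by
      rw [mem_Aop_iff _ _ _ hF]
      constructor
      · rintro ⟨h1, h2⟩ y hy
        rw [YD_le] at hy
        rw [ykappa_eq, ← pext_cell F]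
        by_cases h3 : rowIx y ≤ rowIx x - 1
        · exact Or.inl (pext_mono F hF _ _ _ _ h3 hy.2 h1)
        by_cases h4 : colIx y ≤ colIx x - 1
        · exact Or.inl (pext_mono F hF _ _ _ _ hy.1 h4 h2)
        · right; omega
      · intro hA
        constructor
        · by_cases h1 : rowIx x - 1 < 0
          · exact Or.inl h1
          obtain ⟨z, h1, h2⟩ := YD_ex (m := m) (N := N) (rowIx x - 1) (colIx x)
            (by omega) (by omega) (by omega) (by omega)
          rw [← h1, ← h2, pext_cell]
          exact (hA z ((YD_le _ _).2 (by omega))).resolve_right (by rw [ykappa_eq]; omega)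
        · by_cases h1 : colIx x - 1 < 0
          · exact Or.inr (Or.inl h1)
          obtain ⟨z, h1, h2⟩ := YD_ex (m := m) (N := N) (rowIx x) (colIx x - 1)
            (by omega) (by omega) (by omega) (by omega)
          rw [← h1, ← h2, pext_cell]
          exact (hA z ((YD_le _ _).2 (by omega))).resolve_right (by rw [ykappa_eq]; omega)
    rw [hlow, hup, pext_cell, pext_cell, Sop_eq c F hF]
    simp only [Set.mem_union, Set.mem_sdiff]
    tauto
  · have hout : ∀ G : Set (YD m N), ∀ i' j' : ℤ, 0 ≤ i' → 0 ≤ j' → (m ≤ i' ∨ N ≤ j') →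
        ¬ pext G i' j' := by
      rintro G i' j' h1 h2 h3 (h4 | h4 | ⟨x, hx, rfl, rfl⟩)
      · omega
      · omega
      · have := YD_bd x
        omega
    refine iff_of_false (hout _ _ _ (by omega) (by omega) (by omega)) ?_
    rintro ((h1 | h1) | ⟨-, h1, h2⟩)
    · exact hout _ _ _ (by omega) (by omega) (by omega) h1
    · exact hout _ _ _ (by omega) (by omega) (by omega) h1
    · by_cases h3 : (m : ℤ) ≤ i
      · exact hout _ _ _ (by omega) (by omega) (by omega) h2
      · exact hout _ _ _ (by omega) (by omega) (by omega) h1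

/-- Braid relation: for a color `k ∈ {1,…,n−1}` and any order filter `F` of
`Y_{m,n−m+1}`, `S_k(S_{k+1}(S_k(F))) = S_{k+1}(S_k(S_{k+1}(F)))`. -/
theorem Sop_braid (n m : ℕ) (hm : 1 ≤ m) (hmn : m ≤ n)
    (k : ℤ) (hk1 : 1 ≤ k) (hkn : k + 1 ≤ n)
    (F : Set (YD m (n - m + 1))) (hF : IsOrderFilter F) :
    Sop (ykappa m (n - m + 1)) k (Sop (ykappa m (n - m + 1)) (k + 1)
        (Sop (ykappa m (n - m + 1)) k F)) =
      Sop (ykappa m (n - m + 1)) (k + 1) (Sop (ykappa m (n - m + 1)) k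
        (Sop (ykappa m (n - m + 1)) (k + 1) F)) := by
  have hN : ((n - m + 1 : ℕ) : ℤ) = n - m + 1 := by omega
  generalize n - m + 1 = N at *
  have f1 := Sop_filter k F hF
  have f2 := Sop_filter (k+1) _ f1
  have g1 := Sop_filter (k+1) F hF
  have g2 := Sop_filter k _ g1
  have se := fun G hG i j => pext_Sop_eq (N := N) hm k (by omega) (by omega) G hG i j
  have te := fun G hG i j => pext_Sop_eq (N := N) hm (k+1) (by omega) (by omega) G hG i j
  have sn := fun G hG i j => pext_Sop_ne (m := m) (N := N) k G hG i j
  have tn := fun G hG i j => pext_Sop_ne (m := m) (N := N) (k+1) G hG i j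
  apply pext_inj
  intro i j
  have mono := fun i j => pext_mono F hF i j
  by_cases hk : j - i + m = k
  · rw [se _ f2 i j hk, tn _ g2 i j (by omega), se _ g1 i j hk]
    rw [tn _ f1 (i+1) j (by omega), te _ f1 i (j+1) (by omega), tn _ f1 i j (by omega),
      te _ f1 (i-1) j (by omega), tn _ f1 i (j-1) (by omega)]
    rw [tn _ hF (i+1) j (by omega), te _ hF i (j+1) (by omega), tn _ hF i j (by omega),
      te _ hF (i-1) j (by omega), tn _ hF i (j-1) (by omega)]
    simp only [sub_add_cancel, add_sub_cancel_right]
    rw [sn _ hF (i+1) j (by omega), sn _ hF i (j-1) (by omega), sn _ hF i (j+1) (by omega),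
      sn _ hF (i-1) j (by omega), sn _ hF i (j+1+1) (by omega), sn _ hF (i-1-1) j (by omega),
      sn _ hF (i-1) (j+1) (by omega),
      se _ hF i j (by omega), se _ hF (i+1) (j+1) (by omega), se _ hF (i-1) (j-1) (by omega)]
    simp only [sub_add_cancel, add_sub_cancel_right]
    have e1 := mono (i + 1) (j + 1) (i + 1) j (by omega) (by omega)
    have e2 := mono (i + 1 + 1) (j + 1) (i + 1) (j + 1) (by omega) (by omega)
    have e3 := mono (i + 1) (j + 1 + 1) (i + 1) (j + 1) (by omega) (by omega)
    have e4 := mono (i + 1) (j + 1) i (j + 1) (by omega) (by omega)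
    have e5 := mono i (j + 1 + 1) i (j + 1) (by omega) (by omega)
    have e6 := mono (i + 1) (j + 1 + 1) i (j + 1 + 1) (by omega) (by omega)
    have e7 := mono i (j + 1) (i - 1) (j + 1) (by omega) (by omega)
    have e8 := mono (i + 1) j i j (by omega) (by omega)
    have e9 := mono i (j + 1) i j (by omega) (by omega)
    have e10 := mono (i - 1) (j + 1) (i - 1) j (by omega) (by omega)
    have e11 := mono i j (i - 1) j (by omega) (by omega)
    have e12 := mono i j i (j - 1) (by omega) (by omega)
    have e13 := mono (i - 1) j (i - 1 - 1) j (by omega) (by omega)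
    have e14 := mono (i - 1) j (i - 1) (j - 1) (by omega) (by omega)
    have e15 := mono i (j - 1) (i - 1) (j - 1) (by omega) (by omega)
    have e16 := mono (i - 1 - 1) j (i - 1 - 1) (j - 1) (by omega) (by omega)
    have e17 := mono (i - 1) (j - 1) (i - 1 - 1) (j - 1) (by omega) (by omega)
    have e18 := mono (i - 1) (j - 1) (i - 1) (j - 1 - 1) (by omega) (by omega)
    clear se te sn tn mono f1 f2 g1 g2 hF hk hN hkn hk1
    generalize pext F (i + 1) j = p0 at *
    generalize pext F (i + 1 + 1) (j + 1) = p1 at *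
    generalize pext F (i + 1) (j + 1 + 1) = p2 at *
    generalize pext F (i + 1) (j + 1) = p3 at *
    generalize pext F i (j + 1) = p4 at *
    generalize pext F i (j + 1 + 1) = p5 at *
    generalize pext F (i - 1) (j + 1) = p6 at *
    generalize pext F i j = p7 at *
    generalize pext F (i - 1) j = p8 at *
    generalize pext F i (j - 1) = p9 at *
    generalize pext F (i - 1 - 1) j = p10 at *
    generalize pext F (i - 1) (j - 1) = p11 at *
    generalize pext F (i - 1 - 1) (j - 1) = p12 at *
    generalize pext F (i - 1) (j - 1 - 1) = p13 at *
    grind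
  by_cases hk' : j - i + m = k + 1
  · rw [te _ g2 i j hk', sn _ f2 i j (by omega), te _ f1 i j hk']
    rw [sn _ g1 i (j+1) (by omega), se _ g1 (i+1) j (by omega), sn _ g1 i j (by omega),
      se _ g1 i (j-1) (by omega), sn _ g1 (i-1) j (by omega)]
    rw [sn _ hF i (j+1) (by omega), se _ hF (i+1) j (by omega), sn _ hF i j (by omega),
      se _ hF i (j-1) (by omega), sn _ hF (i-1) j (by omega)]
    simp only [sub_add_cancel, add_sub_cancel_right]
    rw [tn _ hF i (j+1) (by omega), tn _ hF (i-1) j (by omega), tn _ hF (i+1) j (by omega),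
      tn _ hF i (j-1) (by omega), tn _ hF (i+1+1) j (by omega), tn _ hF i (j-1-1) (by omega),
      tn _ hF (i+1) (j-1) (by omega),
      te _ hF i j (by omega), te _ hF (i+1) (j+1) (by omega), te _ hF (i-1) (j-1) (by omega)]
    simp only [sub_add_cancel, add_sub_cancel_right]
    have e1 := mono (i + 1) (j + 1) i (j + 1) (by omega) (by omega)
    have e2 := mono (i + 1) (j + 1 + 1) (i + 1) (j + 1) (by omega) (by omega)
    have e3 := mono (i + 1 + 1) (j + 1) (i + 1) (j + 1) (by omega) (by omega)
    have e4 := mono (i + 1) (j + 1) (i + 1) j (by omega) (by omega)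
    have e5 := mono (i + 1 + 1) j (i + 1) j (by omega) (by omega)
    have e6 := mono (i + 1 + 1) (j + 1) (i + 1 + 1) j (by omega) (by omega)
    have e7 := mono (i + 1) j (i + 1) (j - 1) (by omega) (by omega)
    have e8 := mono i (j + 1) i j (by omega) (by omega)
    have e9 := mono (i + 1) j i j (by omega) (by omega)
    have e10 := mono (i + 1) (j - 1) i (j - 1) (by omega) (by omega)
    have e11 := mono i j i (j - 1) (by omega) (by omega)
    have e12 := mono i j (i - 1) j (by omega) (by omega)
    have e13 := mono i (j - 1) i (j - 1 - 1) (by omega) (by omega)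
    have e14 := mono i (j - 1) (i - 1) (j - 1) (by omega) (by omega)
    have e15 := mono (i - 1) j (i - 1) (j - 1) (by omega) (by omega)
    have e16 := mono i (j - 1 - 1) (i - 1) (j - 1 - 1) (by omega) (by omega)
    have e17 := mono (i - 1) (j - 1) (i - 1) (j - 1 - 1) (by omega) (by omega)
    have e18 := mono (i - 1) (j - 1) (i - 1 - 1) (j - 1) (by omega) (by omega)
    clear se te sn tn mono f1 f2 g1 g2 hF hk hN hkn hk1
    generalize pext F i (j + 1) = p0 at *
    generalize pext F (i + 1) (j + 1 + 1) = p1 at *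
    generalize pext F (i + 1 + 1) (j + 1) = p2 at *
    generalize pext F (i + 1) (j + 1) = p3 at *
    generalize pext F (i + 1) j = p4 at *
    generalize pext F (i + 1 + 1) j = p5 at *
    generalize pext F (i + 1) (j - 1) = p6 at *
    generalize pext F i j = p7 at *
    generalize pext F i (j - 1) = p8 at *
    generalize pext F (i - 1) j = p9 at *
    generalize pext F i (j - 1 - 1) = p10 at *
    generalize pext F (i - 1) (j - 1) = p11 at *
    generalize pext F (i - 1) (j - 1 - 1) = p12 at *
    generalize pext F (i - 1 - 1) (j - 1) = p13 at *
    grind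
  · rw [sn _ f2 i j hk, tn _ f1 i j hk', sn _ hF i j hk, tn _ g2 i j hk', sn _ g1 i j hk,
      tn _ hF i j hk']
end

section
/- Fix integers n, m with 1 ≤ m ≤ (n+1)/2, let P := Y_{m,n−m+1} with I-coloring κ((i,j)) := j − i + m, and let Y be an order filter of P and k ∈ {1,…,n}. Then k ∈ 𝓘(Y) and k+1 ∉ 𝓘(Y) if and only if Y ⊊ S_k(Y). -/
/-- The length `𝐤_i` of row `i` of a subset `Y` of `Y_{m,N}`:
the number of cells of `Y` in row `i`. -/
noncomputable def rowLen (m N : ℕ) (Y : Set (YD m N)) (i : Fin m) : ℕ :=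
  Set.ncard {j : Fin N | (OrderDual.toDual i, OrderDual.toDual j) ∈ Y}

/-- `𝓘(Y) := {𝐤_i + m + 1 − i : 1 ≤ i ≤ m} ⊆ {1,…,n+1}` (here the row index `i`
is 0-indexed, so the element for row `i` is `𝐤_i + m − i`). -/
def ISet (m N : ℕ) (Y : Set (YD m N)) : Set ℤ :=
  {z : ℤ | ∃ i : Fin m, z = (rowLen m N Y i : ℤ) + m - (i : ℤ)}

theorem mem_iff_rowLen {m N : ℕ} {Y : Set (YD m N)} (hY : IsOrderFilter Y) (i : Fin m) (j : Fin N) :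
    (OrderDual.toDual i, OrderDual.toDual j) ∈ Y ↔ (j : ℕ) < rowLen m N Y i := by
  unfold rowLen
  constructor
  · intro h
    have hsub : (Set.Iic j) ⊆ {j : Fin N | (OrderDual.toDual i, OrderDual.toDual j) ∈ Y} := by
      intro j' hj'
      exact hY h ⟨le_refl _, hj'⟩
    have := Set.ncard_le_ncard hsub (Set.toFinite _)
    rw [← Finset.coe_Iic, Set.ncard_coe_finset, Fin.card_Iic] at this
    omega
  · intro h
    by_contra hn
    have hsub : {j : Fin N | (OrderDual.toDual i, OrderDual.toDual j) ∈ Y} ⊆ Set.Iio j := by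
      intro j' hj'
      by_contra hlt
      have hle : j ≤ j' := not_lt.mp hlt
      exact hn (hY hj' ⟨le_refl _, hle⟩)
    have := Set.ncard_le_ncard hsub (Set.toFinite _)
    rw [← Finset.coe_Iio, Set.ncard_coe_finset, Fin.card_Iio] at this
    omega

theorem rowLen_le {m N : ℕ} (Y : Set (YD m N)) (i : Fin m) : rowLen m N Y i ≤ N := by
  unfold rowLen
  have := Set.ncard_le_card {j : Fin N | (OrderDual.toDual i, OrderDual.toDual j) ∈ Y}
  simpa using this

theorem rowLen_anti {m N : ℕ} {Y : Set (YD m N)} (hY : IsOrderFilter Y) {i i' : Fin m}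
    (h : i ≤ i') : rowLen m N Y i' ≤ rowLen m N Y i := by
  unfold rowLen
  refine Set.ncard_le_ncard ?_ (Set.toFinite _)
  intro j hj
  exact hY hj ⟨h, le_refl _⟩

theorem Rop_subset {α C : Type*} [PartialOrder α] (κ : α → C) (c : C) {F : Set α}
    (hF : IsOrderFilter F) : Rop κ c F ⊆ F := by
  intro x hx
  exact hx F ⟨hF, by simp⟩

theorem subset_Aop {α C : Type*} [PartialOrder α] (κ : α → C) (c : C) {F : Set α}
    (hF : IsOrderFilter F) : F ⊆ Aop κ c F := by
  intro x hx
  exact ⟨F, ⟨hF, by simp⟩, hx⟩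

theorem Aop_filter {α C : Type*} [PartialOrder α] (κ : α → C) (c : C) (F : Set α) :
    IsOrderFilter (Aop κ c F) := by
  rintro x y ⟨F', hF', hx⟩ hxy
  exact ⟨F', hF', hF'.1 hx hxy⟩

/-- For an order filter `Y` of `Y_{m,n−m+1}` and `k ∈ {1,…,n}`:
`k ∈ 𝓘(Y)` and `k+1 ∉ 𝓘(Y)` if and only if `Y ⊊ S_k(Y)`. -/
theorem ISet_iff_Sop_gt (n m : ℕ) (hm : 1 ≤ m) (hmn : 2 * m ≤ n + 1)
    (Y : Set (YD m (n - m + 1))) (hY : IsOrderFilter Y)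
    (k : ℤ) (hk1 : 1 ≤ k) (hkn : k ≤ n) :
    (k ∈ ISet m (n - m + 1) Y ∧ k + 1 ∉ ISet m (n - m + 1) Y) ↔
      Y ⊂ Sop (ykappa m (n - m + 1)) k Y := by
  have hN : n - m + 1 + m = n + 1 := by omega
  generalize n - m + 1 = N at *
  constructor
  · rintro ⟨⟨i, hi⟩, hk⟩
    -- the previous row is strictly longer
    have hprev : ∀ a : Fin m, (a : ℕ) < i → rowLen m N Y i < rowLen m N Y a := by
      intro a ha
      have hi2 := i.2
      let p : Fin m := ⟨i - 1, by omega⟩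
      have hp : (p : ℕ) = i - 1 := rfl
      have h1 : rowLen m N Y i ≤ rowLen m N Y p := rowLen_anti hY (Fin.le_def.2 (by omega))
      have h2 : rowLen m N Y p ≤ rowLen m N Y a := rowLen_anti hY (Fin.le_def.2 (by omega))
      have h3 : rowLen m N Y i ≠ rowLen m N Y p := by
        intro h
        apply hk
        refine ⟨p, ?_⟩
        rw [← h, hi]
        omega
      omega
    have hlt : rowLen m N Y i < N := by
      by_contra hge
      have hle := rowLen_le Y i
      by_cases h0 : (i : ℕ) = 0
      · omega
      · have := hprev ⟨0, by omega⟩ (by simpa using Nat.pos_of_ne_zero h0)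
        have := rowLen_le Y ⟨0, by omega⟩
        omega
    let j : Fin N := ⟨rowLen m N Y i, hlt⟩
    have hj : (j : ℕ) = rowLen m N Y i := rfl
    let c : YD m N := (OrderDual.toDual i, OrderDual.toDual j)
    have hcY : c ∉ Y := by
      rw [mem_iff_rowLen hY]; omega
    have hcA : c ∈ Aop (ykappa m N) k Y := by
      refine ⟨insert c Y, ⟨?_, ?_⟩, Set.mem_insert _ _⟩
      · rintro x ⟨a, b⟩ hx hxy
        rcases hx with rfl | hx
        · have h1 : OrderDual.ofDual a ≤ i := hxy.1
          have h2 : OrderDual.ofDual b ≤ j := hxy.2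
          by_cases he : OrderDual.ofDual a = i ∧ OrderDual.ofDual b = j
          · left
            exact Prod.ext he.1 he.2
          · right
            refine (mem_iff_rowLen hY (OrderDual.ofDual a) (OrderDual.ofDual b)).2 ?_
            rcases lt_or_eq_of_le h1 with h1' | h1'
            · have := hprev _ h1'
              have h2' := Fin.le_def.1 h2
              omega
            · have h2' : OrderDual.ofDual b < j := lt_of_le_of_ne h2 (fun h => he ⟨h1', h⟩)
              rw [h1']
              exact h2'
        · exact Or.inr (hY hx hxy)
      · rintro x ⟨hx, hxY⟩
        rcases hx with rfl | hx
        · change ((j : ℕ) : ℤ) - ((i : ℕ) : ℤ) + m = k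
          omega
        · exact absurd hx hxY
    have hR : Y ⊆ Rop (ykappa m N) k Y := by
      rintro ⟨a, b⟩ hx F' ⟨hF', hsub⟩
      by_contra hxF
      have hcol : (((OrderDual.ofDual b : Fin N) : ℕ) : ℤ) - ((OrderDual.ofDual a : Fin m) : ℕ) + m = k :=
        hsub ⟨hx, hxF⟩
      have hb := (mem_iff_rowLen hY (OrderDual.ofDual a) (OrderDual.ofDual b)).1 hx
      have hai : (OrderDual.ofDual a : Fin m).1 < i.1 := by
        by_contra hge
        have := rowLen_anti hY (Fin.le_def.2 (not_lt.1 hge))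
        omega
      have hi2 := i.2
      let a' : Fin m := ⟨(OrderDual.ofDual a : Fin m).1 + 1, by omega⟩
      have ha' : (a' : ℕ) = (OrderDual.ofDual a : Fin m).1 + 1 := rfl
      have hle : rowLen m N Y i ≤ rowLen m N Y a' := rowLen_anti hY (Fin.le_def.2 (by omega))
      have hy : (OrderDual.toDual a', b) ∈ Y :=
        (mem_iff_rowLen hY a' (OrderDual.ofDual b)).2 (by omega)
      have hyF : (OrderDual.toDual a', b) ∈ F' := by
        by_contra hyF
        have h : (((OrderDual.ofDual b : Fin N) : ℕ) : ℤ) - (a' : ℕ) + m = k := hsub ⟨hy, hyF⟩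
        omega
      refine hxF (hF' hyF ⟨?_, le_refl _⟩)
      change (OrderDual.ofDual a : Fin m) ≤ a'
      exact Fin.le_def.2 (by omega)
    have hRe : Rop (ykappa m N) k Y = Y := (Rop_subset _ _ hY).antisymm hR
    have hS : Sop (ykappa m N) k Y = Aop (ykappa m N) k Y := by
      unfold Sop
      rw [hRe, Set.sdiff_union_of_subset (subset_Aop _ _ hY), if_pos (Aop_filter _ _ _)]
    rw [hS]
    exact ⟨subset_Aop _ _ hY, fun h => hcY (h hcA)⟩
  · rintro ⟨-, hns⟩
    obtain ⟨x, hx, hxY⟩ := Set.not_subset.1 hns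
    obtain ⟨i, j, rfl⟩ : ∃ (i : Fin m) (j : Fin N), x = (OrderDual.toDual i, OrderDual.toDual j) :=
      ⟨OrderDual.ofDual x.1, OrderDual.ofDual x.2, rfl⟩
    have hxA : (OrderDual.toDual i, OrderDual.toDual j) ∈ Aop (ykappa m N) k Y := by
      unfold Sop at hx
      split_ifs at hx
      · rcases hx with hx | hx
        · exact hx.1
        · exact absurd (Rop_subset _ _ hY hx) hxY
      · exact absurd hx hxY
    obtain ⟨F', ⟨hF', hsub⟩, hxF⟩ := hxA
    have hi2 := i.2
    have hj2 := j.2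
    have hcol : ((j : ℕ) : ℤ) - (i : ℕ) + m = k := hsub ⟨hxF, hxY⟩
    have key : ∀ (i' : Fin m) (j' : Fin N), i' ≤ i → j' ≤ j →
        ((j' : ℕ) : ℤ) - (i' : ℕ) + m ≠ k → (j' : ℕ) < rowLen m N Y i' := by
      intro i' j' h1 h2 h3
      rw [← mem_iff_rowLen hY]
      by_contra hn
      exact h3 (hsub ⟨hF' hxF ⟨h1, h2⟩, hn⟩)
    rw [mem_iff_rowLen hY] at hxY
    have hL : rowLen m N Y i = j := by
      by_cases h0 : (j : ℕ) = 0
      · omega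
      · have := key i ⟨j - 1, by omega⟩ le_rfl (Fin.le_def.2 (by simp)) (by
          simp only; omega)
        simp only at this
        omega
    refine ⟨⟨i, by omega⟩, ?_⟩
    rintro ⟨i', hi'⟩
    by_cases hii : (i' : ℕ) < i
    · let p : Fin m := ⟨i - 1, by omega⟩
      have hp : (p : ℕ) = i - 1 := rfl
      have h1 := key p j (Fin.le_def.2 (by omega)) le_rfl (by omega)
      have h2 : rowLen m N Y p ≤ rowLen m N Y i' := rowLen_anti hY (Fin.le_def.2 (by omega))
      omega
    · have := rowLen_anti hY (Fin.le_def.2 (not_lt.1 hii))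
      omega
end
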